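/- arXiv:2102.12958 — 7 statements merged into one kernel-verified Lean document; each statement's English description precedes it below -/
import Mathlib

section
/- Let d ≥ 1 and let U : ℂ → Matrix (Fin d) (Fin d) ℂ be a matrix-valued function such that each entry function ε ↦ (U ε) i j is meromorphic at 0. Suppose there exists δ > 0 such that for every real ε with 0 < ε < δ the matrix U ε is unitary. Then there exists V : ℂ → Matrix (Fin d) (Fin d) ℂ such that each entry of V is analytic at 0 and V ε = U ε for all ε in some punctured neighborhood of 0 in ℂ. -/
open Matrix Filter Topology

theorem stmt3 (d : ℕ) (hd : 1 ≤ d) (U : ℂ → Matrix (Fin d) (Fin d) ℂ)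
    (hmero : ∀ i j : Fin d, MeromorphicAt (fun ε => U ε i j) 0)
    (hunit : ∃ δ : ℝ, 0 < δ ∧ ∀ ε : ℝ, 0 < ε → ε < δ →
      (U ε)ᴴ * U ε = 1 ∧ U ε * (U ε)ᴴ = 1) :
    ∃ V : ℂ → Matrix (Fin d) (Fin d) ℂ,
      (∀ i j : Fin d, AnalyticAt ℂ (fun ε => V ε i j) 0) ∧
      ∀ᶠ ε in 𝓝[≠] (0 : ℂ), V ε = U ε := by
  obtain ⟨δ, hδ, hU⟩ := hunit
  have hcoe : Tendsto (fun x : ℝ => (x : ℂ)) (𝓝[>] 0) (𝓝[≠] 0) := by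
    refine tendsto_nhdsWithin_iff.2 ⟨?_, ?_⟩
    · have h : Tendsto (fun x : ℝ => (x : ℂ)) (𝓝 0) (𝓝 ((0 : ℝ) : ℂ)) :=
        Complex.continuous_ofReal.tendsto 0
      rw [Complex.ofReal_zero] at h
      exact h.mono_left nhdsWithin_le_nhds
    · filter_upwards [self_mem_nhdsWithin] with x hx
      have hx' : (0 : ℝ) < x := hx
      simpa using hx'.ne'
  have hord : ∀ i j, 0 ≤ meromorphicOrderAt (fun ε => U ε i j) 0 := by
    intro i j
    by_contra! hlt
    have h1 := tendsto_norm_cobounded_atTop.comp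
      ((tendsto_cobounded_of_meromorphicOrderAt_neg hlt).comp hcoe)
    have h2 := h1.eventually_gt_atTop 1
    have h3 : ∀ᶠ x : ℝ in 𝓝[>] 0, x ∈ Set.Ioo 0 δ := Ioo_mem_nhdsGT hδ
    obtain ⟨x, hx, hx0, hxδ⟩ := (h2.and h3).exists
    have hmem : U x ∈ Matrix.unitaryGroup (Fin d) ℂ :=
      Matrix.mem_unitaryGroup_iff.2 (hU x hx0 hxδ).2
    have := entry_norm_bound_of_unitary hmem i j
    simp only [Function.comp] at hx
    linarith
  refine ⟨fun ε => Matrix.of fun i j => toMeromorphicNFAt (fun ε => U ε i j) 0 ε, ?_, ?_⟩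
  · intro i j
    exact (hmero i j).meromorphicOrderAt_nonneg_iff_analyticAt_toMeromorphicNFAt.1 (hord i j)
  · have : ∀ᶠ ε in 𝓝[≠] (0 : ℂ), ∀ i j,
        U ε i j = toMeromorphicNFAt (fun ε => U ε i j) 0 ε :=
      eventually_all.2 fun i => eventually_all.2 fun j =>
        (hmero i j).eq_nhdsNE_toMeromorphicNFAt
    filter_upwards [this] with ε h
    ext i j
    exact (h i j).symm
end

section
/- Let U be a unitary d×d complex matrix and P a d×d complex matrix with P * P = P, Pᴴ = P, and U * P = P * U. Assume U − 1 is invertible. Then the matrix K := −i·(U − 1)⁻¹ * P * (U + 1) is Hermitian. -/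
open Matrix

theorem stmt4 (d : ℕ) (U P : Matrix (Fin d) (Fin d) ℂ)
    (hU : Uᴴ * U = 1 ∧ U * Uᴴ = 1)
    (hP2 : P * P = P) (hPh : Pᴴ = P) (hUP : U * P = P * U)
    (hinv : IsUnit (U - 1)) :
    ((-Complex.I) • ((U - 1)⁻¹ * P * (U + 1))).IsHermitian := by
  have hdet := (Matrix.isUnit_iff_isUnit_det _).1 hinv
  have h1 : (U - 1) * (U - 1)⁻¹ = 1 := Matrix.mul_nonsing_inv _ hdet
  have h2 : ((U - 1)⁻¹)ᴴ * (Uᴴ - 1) = 1 := by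
    have := congrArg conjTranspose h1
    simpa [conjTranspose_mul, -conjTranspose_nonsing_inv] using this
  have h1' : (U - 1)⁻¹ * (U - 1) = 1 := Matrix.nonsing_inv_mul _ hdet
  have h2' : (Uᴴ - 1) * ((U - 1)⁻¹)ᴴ = 1 := by
    have := congrArg conjTranspose h1'
    simpa [conjTranspose_mul, -conjTranspose_nonsing_inv] using this
  have hc : P * Uᴴ = Uᴴ * P := by
    have := congrArg conjTranspose hUP
    simpa [conjTranspose_mul, hPh] using this
  have e1 : (U - 1) * (Uᴴ + 1) = U - Uᴴ := by
    simp only [sub_mul, mul_add, hU.2, mul_one, one_mul]; abel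
  have e2 : (U + 1) * (Uᴴ - 1) = Uᴴ - U := by
    simp only [add_mul, mul_sub, hU.2, mul_one, one_mul]; abel
  have e3 : (U - Uᴴ) * P = -(P * (Uᴴ - U)) := by
    rw [sub_mul, mul_sub, hUP, hc]; abel
  have e4 : (U - 1) * ((Uᴴ + 1) * P) = -(P * ((U + 1) * (Uᴴ - 1))) := by
    rw [← mul_assoc, e1, e2, e3]
  have key : (Uᴴ + 1) * (P * ((U - 1)⁻¹)ᴴ) = -((U - 1)⁻¹ * P * (U + 1)) := by
    calc (Uᴴ + 1) * (P * ((U - 1)⁻¹)ᴴ)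
        = ((U - 1)⁻¹ * (U - 1)) * ((Uᴴ + 1) * (P * ((U - 1)⁻¹)ᴴ)) := by rw [h1', one_mul]
      _ = (U - 1)⁻¹ * ((U - 1) * ((Uᴴ + 1) * P)) * ((U - 1)⁻¹)ᴴ := by
          simp only [mul_assoc]
      _ = -((U - 1)⁻¹ * P * (U + 1) * ((Uᴴ - 1) * ((U - 1)⁻¹)ᴴ)) := by
          rw [e4]; simp only [mul_assoc, mul_neg, neg_mul]
      _ = _ := by rw [h2', mul_one]
  unfold Matrix.IsHermitian
  rw [conjTranspose_smul, conjTranspose_mul, conjTranspose_mul, hPh, conjTranspose_add,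
    conjTranspose_one, key]
  simp
end

section
/- Let U be a unitary d×d complex matrix and P a d×d complex matrix with P * P = P, Pᴴ = P, and U * P = P * U. Assume both U − 1 and U + 1 are invertible, and set K := −i·(U − 1)⁻¹ * P * (U + 1) and K⊥ := i·(U + 1)⁻¹ * (1 − P) * (U − 1). Then for all vectors x, v ∈ ℂ^d: i·((U − 1).mulVec x) + (U + 1).mulVec v = 0 if and only if both P.mulVec x + K.mulVec v = 0 and (1 − P).mulVec v + K⊥.mulVec x = 0. -/
open Matrix

theorem stmt6 (d : ℕ) (U P : Matrix (Fin d) (Fin d) ℂ)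
    (hU : Uᴴ * U = 1 ∧ U * Uᴴ = 1)
    (hP2 : P * P = P) (hPh : Pᴴ = P) (hUP : U * P = P * U)
    (hinv₁ : IsUnit (U - 1)) (hinv₂ : IsUnit (U + 1)) :
    ∀ x v : Fin d → ℂ,
      Complex.I • ((U - 1).mulVec x) + (U + 1).mulVec v = 0 ↔
        (P.mulVec x + ((-Complex.I) • ((U - 1)⁻¹ * P * (U + 1))).mulVec v = 0 ∧
         (1 - P).mulVec v + (Complex.I • ((U + 1)⁻¹ * (1 - P) * (U - 1))).mulVec x = 0) := by
  intro x v
  have d1 : IsUnit (U - 1).det := (Matrix.isUnit_iff_isUnit_det _).1 hinv₁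
  have d2 : IsUnit (U + 1).det := (Matrix.isUnit_iff_isUnit_det _).1 hinv₂
  have c1 : P * (U - 1) = (U - 1) * P := by rw [mul_sub, sub_mul, hUP]; simp
  have c2 : (1 - P) * (U + 1) = (U + 1) * (1 - P) := by
    simp only [mul_add, sub_mul, add_mul, mul_sub, hUP, one_mul, mul_one]; abel
  have a1 : (U - 1)⁻¹ * P * (U - 1) = P := by
    rw [mul_assoc, c1, ← mul_assoc, Matrix.nonsing_inv_mul _ d1, one_mul]
  have a2 : (U + 1)⁻¹ * (1 - P) * (U + 1) = 1 - P := by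
    rw [mul_assoc, c2, ← mul_assoc, Matrix.nonsing_inv_mul _ d2, one_mul]
  have b1 : (U - 1) * ((U - 1)⁻¹ * P) = P := by
    rw [← mul_assoc, Matrix.mul_nonsing_inv _ d1, one_mul]
  have b2 : (U + 1) * ((U + 1)⁻¹ * (1 - P)) = 1 - P := by
    rw [← mul_assoc, Matrix.mul_nonsing_inv _ d2, one_mul]
  have e1 : P.mulVec x + ((-Complex.I) • ((U - 1)⁻¹ * P * (U + 1))).mulVec v
      = (-Complex.I) • ((U - 1)⁻¹ * P).mulVec
          (Complex.I • ((U - 1).mulVec x) + (U + 1).mulVec v) := by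
    rw [Matrix.mulVec_add, Matrix.mulVec_smul, Matrix.mulVec_mulVec, Matrix.mulVec_mulVec, a1,
      smul_add, smul_smul, Matrix.smul_mulVec]
    simp
  have e2 : (1 - P).mulVec v + (Complex.I • ((U + 1)⁻¹ * (1 - P) * (U - 1))).mulVec x
      = ((U + 1)⁻¹ * (1 - P)).mulVec
          (Complex.I • ((U - 1).mulVec x) + (U + 1).mulVec v) := by
    rw [Matrix.mulVec_add, Matrix.mulVec_smul, Matrix.mulVec_mulVec, Matrix.mulVec_mulVec, a2,
      Matrix.smul_mulVec, add_comm]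
  rw [e1, e2]
  generalize Complex.I • ((U - 1).mulVec x) + (U + 1).mulVec v = w
  constructor
  · rintro rfl
    simp
  · rintro ⟨h1, h2⟩
    have h1' : ((U - 1)⁻¹ * P).mulVec w = 0 := by
      rcases smul_eq_zero.1 h1 with h | h
      · simp at h
      · exact h
    have p1 : P.mulVec w = 0 := by
      rw [← b1, ← Matrix.mulVec_mulVec, h1', Matrix.mulVec_zero]
    have p2 : (1 - P).mulVec w = 0 := by
      rw [← b2, ← Matrix.mulVec_mulVec, h2, Matrix.mulVec_zero]
    rw [Matrix.sub_mulVec, p1, Matrix.one_mulVec, sub_zero] at p2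
    exact p2
end

section
/- Let P : ℝ → Matrix (Fin d) (Fin d) ℂ be differentiable at 0 and such that for all ε in some neighborhood of 0 one has P ε * P ε = P ε and (P ε)ᴴ = P ε. Set P₀ := P 0 and P₁ := deriv P 0, and for ε ∈ ℝ define S ε := (P ε * P₀ + (1 − P ε) * (1 − P₀))⁻¹ * sqrt(1 − (P ε − P₀)^2), where sqrt denotes the matrix square root (via the continuous functional calculus, agreeing with the positive semidefinite square root). Then S 0 = 1 and S has derivative P₁ * (1 − P₀) − P₁ * P₀ at 0; moreover this derivative also equals P₁ * (1 − P₀) − (1 − P₀) * P₁. -/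
open Matrix Filter Topology

/-- The matrix square root, via the continuous functional calculus. For a positive
semidefinite matrix this is its unique positive semidefinite square root. -/
noncomputable def matSqrt {d : ℕ} (M : Matrix (Fin d) (Fin d) ℂ) :
    Matrix (Fin d) (Fin d) ℂ :=
  cfc Real.sqrt M

attribute [local instance] Matrix.normedAddCommGroup Matrix.normedSpace

lemma aux_sqrt {A : Type*} [NormedRing A] [StarRing A] [NormedAlgebra ℝ A]
    [IsometricContinuousFunctionalCalculus ℝ A IsSelfAdjoint] (M : A) (hM : IsSelfAdjoint M) :
    ‖cfc Real.sqrt M - 1‖ ≤ ‖M - 1‖ := by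
  have h1 : cfc Real.sqrt M - 1 = cfc (fun x => Real.sqrt x - 1) M := by
    rw [cfc_sub (fun x => Real.sqrt x) (fun _ => 1) M, cfc_const_one ℝ M]
  have h2 : M - 1 = cfc (fun x : ℝ => x - 1) M := by
    rw [cfc_sub (fun x => x) (fun _ => 1) M, cfc_const_one ℝ M, cfc_id' ℝ M]
  rw [h1]
  refine norm_cfc_le (norm_nonneg _) fun x hx => ?_
  rw [h2]
  refine le_trans ?_ (norm_apply_le_norm_cfc (fun x : ℝ => x - 1) M hx)
  rw [Real.norm_eq_abs, Real.norm_eq_abs]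
  rcases le_total 0 x with h | h
  · have := Real.sq_sqrt h
    have h0 := Real.sqrt_nonneg x
    have : x - 1 = (√x - 1) * (√x + 1) := by nlinarith
    rw [this, abs_mul]
    refine le_mul_of_one_le_right (abs_nonneg _) ?_
    rw [abs_of_nonneg (by linarith)]; linarith
  · rw [Real.sqrt_eq_zero_of_nonpos h, abs_of_nonpos (by norm_num), abs_of_nonpos (by linarith)]
    linarith

lemma aux_main {A : Type*} [NormedRing A] [StarRing A] [NormedAlgebra ℝ A] [CompleteSpace A]
    [IsometricContinuousFunctionalCalculus ℝ A IsSelfAdjoint] (P : ℝ → A) (P1 : A)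
    (hd : HasDerivAt P P1 0)
    (hP : ∀ᶠ ε in 𝓝 (0 : ℝ), P ε * P ε = P ε ∧ star (P ε) = P ε)
    (S : ℝ → A)
    (hS : ∀ ε : ℝ, S ε = Ring.inverse (P ε * P 0 + (1 - P ε) * (1 - P 0)) *
      cfc Real.sqrt (1 - (P ε - P 0) ^ 2)) :
    S 0 = 1 ∧ HasDerivAt S (P1 * (1 - P 0) - P1 * P 0) 0 ∧
    P1 * (1 - P 0) - P1 * P 0 = P1 * (1 - P 0) - (1 - P 0) * P1 := by
  obtain ⟨h0, h0s⟩ := hP.self_of_nhds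
  have hW0 : P 0 * P 0 + (1 - P 0) * (1 - P 0) = 1 := by
    simp only [mul_sub, sub_mul, h0, mul_one, one_mul]; abel
  have hR0 : cfc Real.sqrt (1 - (P 0 - P 0) ^ 2) = (1 : A) := by
    have := aux_sqrt (1 : A) (IsSelfAdjoint.one A)
    rw [sub_self, norm_zero] at this
    simpa using sub_eq_zero.1 (norm_le_zero_iff.1 this)
  refine ⟨by rw [hS, hW0, hR0]; simp, ?_, ?_⟩
  · have hW : HasDerivAt (fun ε => P ε * P 0 + (1 - P ε) * (1 - P 0))
        (P1 * P 0 + (-P1) * (1 - P 0)) 0 :=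
      (hd.mul_const _).add ((hd.const_sub 1).mul_const _)
    have hI : HasDerivAt (fun ε => Ring.inverse (P ε * P 0 + (1 - P ε) * (1 - P 0)))
        (-(P1 * P 0 + (-P1) * (1 - P 0))) 0 := by
      have h := hasFDerivAt_ringInverse (𝕜 := ℝ) (1 : Aˣ)
      have h' := HasFDerivAt.comp_hasDerivAt_of_eq (x := (0:ℝ)) (hl := h) (hf := hW)
        (hy := by simp [hW0])
      simpa [Function.comp_def] using h'
    have hR : HasDerivAt (fun ε => cfc Real.sqrt (1 - (P ε - P 0) ^ 2)) (0 : A) 0 := by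
      rw [hasDerivAt_iff_isLittleO]
      simp only [hR0, smul_zero, sub_zero]
      have hO : (fun ε => P ε - P 0) =O[𝓝 0] fun ε : ℝ => ε := by
        simpa using hd.isBigO_sub
      have h2 : (fun ε => cfc Real.sqrt (1 - (P ε - P 0) ^ 2) - 1) =O[𝓝 0]
          fun ε => (P ε - P 0) * (P ε - P 0) := by
        refine Asymptotics.IsBigO.of_bound 1 ?_
        filter_upwards [hP] with ε hε
        have hs : IsSelfAdjoint (P ε - P 0) := IsSelfAdjoint.sub hε.2 h0s
        refine (aux_sqrt _ ((IsSelfAdjoint.one A).sub (hs.pow 2))).trans ?_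
        rw [sub_sub_cancel_left, norm_neg, one_mul, pow_two]
      refine (h2.trans (hO.mul hO)).trans_isLittleO ?_
      have := Asymptotics.isLittleO_pow_id (𝕜 := ℝ) (n := 2) (by norm_num)
      simpa [pow_two] using this
    have hm := hI.mul hR
    have hSf : S = fun ε => Ring.inverse (P ε * P 0 + (1 - P ε) * (1 - P 0)) *
      cfc Real.sqrt (1 - (P ε - P 0) ^ 2) := funext hS
    rw [hSf]
    refine hm.congr_deriv ?_
    rw [hR0]
    simp only [mul_zero, mul_one, add_zero]
    noncomm_ring
  · have h1 : HasDerivAt (fun ε => P ε * P ε) (P1 * P 0 + P 0 * P1) 0 := hd.mul hd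
    have h2 : HasDerivAt P (P1 * P 0 + P 0 * P1) 0 :=
      h1.congr_of_eventuallyEq (hP.mono fun ε h => h.1.symm)
    have h3 := hd.unique h2
    congr 1
    rw [sub_mul, one_mul]
    exact eq_sub_of_add_eq h3.symm

section
open scoped Matrix.Norms.L2Operator
lemma aux_mat (d : ℕ) (P : ℝ → Matrix (Fin d) (Fin d) ℂ) (P1 : Matrix (Fin d) (Fin d) ℂ)
    (hd : HasDerivAt P P1 0)
    (hP : ∀ᶠ ε in 𝓝 (0 : ℝ), P ε * P ε = P ε ∧ (P ε)ᴴ = P ε)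
    (S : ℝ → Matrix (Fin d) (Fin d) ℂ)
    (hS : ∀ ε : ℝ, S ε = (P ε * P 0 + (1 - P ε) * (1 - P 0))⁻¹ *
      matSqrt (1 - (P ε - P 0) ^ 2)) :
    S 0 = 1 ∧ HasDerivAt S (P1 * (1 - P 0) - P1 * P 0) 0 ∧
    P1 * (1 - P 0) - P1 * P 0 = P1 * (1 - P 0) - (1 - P 0) * P1 := by
  refine aux_main P P1 hd hP S fun ε => ?_
  rw [hS, Matrix.nonsing_inv_eq_ringInverse]
  rfl
end

theorem stmt8 (d : ℕ) (P : ℝ → Matrix (Fin d) (Fin d) ℂ)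
    (hdiff : DifferentiableAt ℝ P 0)
    (hP : ∀ᶠ ε in 𝓝 (0 : ℝ), P ε * P ε = P ε ∧ (P ε)ᴴ = P ε)
    (S : ℝ → Matrix (Fin d) (Fin d) ℂ)
    (hS : ∀ ε : ℝ, S ε = (P ε * P 0 + (1 - P ε) * (1 - P 0))⁻¹ *
      matSqrt (1 - (P ε - P 0) ^ 2)) :
    S 0 = 1 ∧
    HasDerivAt S (deriv P 0 * (1 - P 0) - deriv P 0 * P 0) 0 ∧
    deriv P 0 * (1 - P 0) - deriv P 0 * P 0 =
      deriv P 0 * (1 - P 0) - (1 - P 0) * deriv P 0 := by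
  exact aux_mat d P (deriv P 0) hdiff.hasDerivAt hP S hS
end

section
/- Let U, P : ℝ → Matrix (Fin d) (Fin d) ℂ both be differentiable at 0 and such that for all ε in some neighborhood of 0: U ε is unitary, P ε * P ε = P ε, (P ε)ᴴ = P ε, U ε * P ε = P ε * U ε, and U ε − 1 is invertible. Assume moreover U 0 * P 0 = −P 0. Define K ε := −i·(U ε − 1)⁻¹ * P ε * (U ε + 1). Then K 0 = 0, K is differentiable at 0, and P 0 * (deriv K 0) * (1 − P 0) = 0. -/
open Matrix Filter Topology

attribute [local instance] Matrix.normedAddCommGroup Matrix.normedSpace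

theorem diff_entry {d : ℕ} {A : ℝ → Matrix (Fin d) (Fin d) ℂ} {x : ℝ} :
    DifferentiableAt ℝ A x ↔ ∀ i j, DifferentiableAt ℝ (fun t => A t i j) x := by
  constructor
  · intro h i j
    exact differentiableAt_pi.1 (differentiableAt_pi.1 h i) j
  · intro h
    exact differentiableAt_pi.2 fun i => differentiableAt_pi.2 fun j => h i j

theorem diff_mul {d : ℕ} {A B : ℝ → Matrix (Fin d) (Fin d) ℂ} {x : ℝ}
    (hA : DifferentiableAt ℝ A x) (hB : DifferentiableAt ℝ B x) :
    DifferentiableAt ℝ (fun t => A t * B t) x := by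
  rw [diff_entry] at *
  intro i j
  simp only [Matrix.mul_apply]
  exact DifferentiableAt.fun_sum fun k _ => (hA i k).mul (hB k j)

theorem diff_det {d : ℕ} {A : ℝ → Matrix (Fin d) (Fin d) ℂ} {x : ℝ}
    (hA : DifferentiableAt ℝ A x) : DifferentiableAt ℝ (fun t => (A t).det) x := by
  rw [diff_entry] at hA
  simp only [Matrix.det_apply']
  refine DifferentiableAt.fun_sum fun s _ => ?_
  refine DifferentiableAt.const_mul ?_ _
  exact DifferentiableAt.fun_finsetProd fun i _ => hA _ _

theorem diff_inv {d : ℕ} {A : ℝ → Matrix (Fin d) (Fin d) ℂ} {x : ℝ}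
    (hA : DifferentiableAt ℝ A x) (h : IsUnit (A x)) :
    DifferentiableAt ℝ (fun t => (A t)⁻¹) x := by
  have hd : (A x).det ≠ 0 := ((Matrix.isUnit_iff_isUnit_det _).1 h).ne_zero
  rw [diff_entry]
  intro i j
  simp only [Matrix.inv_def, Ring.inverse_eq_inv', Matrix.smul_apply, smul_eq_mul,
    Matrix.adjugate_apply]
  refine ((diff_det hA).inv hd).mul (diff_det ?_)
  rw [diff_entry] at *
  intro k l
  simp only [Matrix.updateRow_apply]
  split_ifs
  · exact differentiableAt_const _
  · exact hA k l

theorem deriv_entry {d : ℕ} {A : ℝ → Matrix (Fin d) (Fin d) ℂ} {x : ℝ}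
    (hA : DifferentiableAt ℝ A x) (i j : Fin d) :
    deriv A x i j = deriv (fun t => A t i j) x := by
  have h := hasDerivAt_pi.1 (hasDerivAt_pi.1 hA.hasDerivAt i) j
  exact h.deriv.symm

theorem deriv_mul_mat {d : ℕ} {A B : ℝ → Matrix (Fin d) (Fin d) ℂ} {x : ℝ}
    (hA : DifferentiableAt ℝ A x) (hB : DifferentiableAt ℝ B x) :
    deriv (fun t => A t * B t) x = deriv A x * B x + A x * deriv B x := by
  ext i j
  rw [deriv_entry (diff_mul hA hB)]
  simp only [Matrix.mul_apply, Matrix.add_apply, deriv_entry hA, deriv_entry hB]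
  rw [diff_entry] at hA hB
  rw [deriv_fun_sum fun k _ => (hA i k).fun_mul (hB k j), ← Finset.sum_add_distrib]
  exact Finset.sum_congr rfl fun k _ => deriv_fun_mul (hA i k) (hB k j)

theorem stmt9 (d : ℕ) (U P : ℝ → Matrix (Fin d) (Fin d) ℂ)
    (hU : DifferentiableAt ℝ U 0) (hP : DifferentiableAt ℝ P 0)
    (hyp : ∀ᶠ ε in 𝓝 (0 : ℝ),
      ((U ε)ᴴ * U ε = 1 ∧ U ε * (U ε)ᴴ = 1) ∧
      P ε * P ε = P ε ∧ (P ε)ᴴ = P ε ∧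
      U ε * P ε = P ε * U ε ∧ IsUnit (U ε - 1))
    (h0 : U 0 * P 0 = -(P 0))
    (K : ℝ → Matrix (Fin d) (Fin d) ℂ)
    (hK : ∀ ε : ℝ, K ε = (-Complex.I) • ((U ε - 1)⁻¹ * P ε * (U ε + 1))) :
    K 0 = 0 ∧ DifferentiableAt ℝ K 0 ∧ P 0 * deriv K 0 * (1 - P 0) = 0 := by
  have hKf : K = fun ε => (-Complex.I) • ((U ε - 1)⁻¹ * P ε * (U ε + 1)) := funext hK
  obtain ⟨-, -, -, hc0, hu0⟩ := hyp.self_of_nhds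
  have hK0 : K 0 = 0 := by
    have : P 0 * (U 0 + 1) = 0 := by rw [mul_add, ← hc0, h0]; simp
    rw [hK, mul_assoc, this]; simp
  have hKd : DifferentiableAt ℝ K 0 := by
    have h := diff_mul (diff_mul (diff_inv (hU.sub_const 1) hu0) hP) (hU.add_const 1)
    rw [diff_entry] at h ⊢
    intro i j
    simp only [hKf, Matrix.smul_apply, smul_eq_mul]
    exact (h i j).const_mul _
  refine ⟨hK0, hKd, ?_⟩
  have hev : K =ᶠ[𝓝 0] fun ε => K ε * P ε := by
    filter_upwards [hyp] with ε ⟨_, hp, _, hc, _⟩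
    have h1 : P ε * (U ε + 1) * P ε = P ε * (U ε + 1) := by
      rw [mul_assoc, add_mul, hc, one_mul, mul_add, ← mul_assoc, hp, mul_add, mul_one]
    simp only [hK, smul_mul_assoc]
    rw [mul_assoc (U ε - 1)⁻¹, mul_assoc (U ε - 1)⁻¹, h1]
  have hd : deriv K 0 = deriv K 0 * P 0 := by
    have h := hev.deriv_eq.trans (deriv_mul_mat hKd hP)
    rwa [hK0, zero_mul, add_zero] at h
  rw [mul_assoc, mul_sub, mul_one, ← hd, sub_self, mul_zero]
end

section
/- Let H be a Hermitian d×d complex matrix, G a positive definite d×d complex matrix, μ a nonzero real number, and set T := H + i·μ·G (so that T is invertible). Let S be a Hermitian m×m complex matrix and let B be a d×m complex matrix whose associated linear map is injective (B.mulVec c = 0 implies c = 0). Then the m×m matrix Bᴴ * T⁻¹ * B − S is invertible. -/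
open Matrix
open scoped ComplexOrder

theorem aux_im {n : ℕ} {A : Matrix (Fin n) (Fin n) ℂ} (hA : A.IsHermitian) (x : Fin n → ℂ) :
    (star x ⬝ᵥ A *ᵥ x).im = 0 := by
  simpa using hA.im_star_dotProduct_mulVec_self x

theorem aux_zero {d : ℕ} {H G : Matrix (Fin d) (Fin d) ℂ}
    (hH : H.IsHermitian) (hG : G.PosDef) {μ : ℝ} (hμ : μ ≠ 0) (x : Fin d → ℂ)
    (hx : (star x ⬝ᵥ (H + (Complex.I * (μ : ℂ)) • G) *ᵥ x).im = 0) : x = 0 := by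
  by_contra h0
  have hp := hG.dotProduct_mulVec_pos h0
  have hre : 0 < (star x ⬝ᵥ G *ᵥ x).re := (Complex.lt_def.1 hp).1
  rw [add_mulVec, dotProduct_add, smul_mulVec, dotProduct_smul, Complex.add_im, aux_im hH] at hx
  simp [hμ] at hx
  exact hre.ne' hx

theorem stmt11 (d m : ℕ) (H G : Matrix (Fin d) (Fin d) ℂ)
    (hH : H.IsHermitian) (hG : G.PosDef) (μ : ℝ) (hμ : μ ≠ 0)
    (S : Matrix (Fin m) (Fin m) ℂ) (hS : S.IsHermitian)
    (B : Matrix (Fin d) (Fin m) ℂ) (hB : ∀ c : Fin m → ℂ, B.mulVec c = 0 → c = 0) :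
    IsUnit (Bᴴ * (H + (Complex.I * (μ : ℂ)) • G)⁻¹ * B - S) := by
  have key := aux_zero hH hG hμ
  generalize H + (Complex.I * (μ : ℂ)) • G = T at key ⊢
  have hT : IsUnit T := by
    refine mulVec_injective_iff_isUnit.1 ((injective_iff_map_eq_zero T.mulVecLin).2 fun x hx => ?_)
    apply key
    rw [mulVecLin_apply] at hx
    simp [hx]
  refine mulVec_injective_iff_isUnit.1 ((injective_iff_map_eq_zero (mulVecLin _)).2 fun c hc => ?_)
  rw [mulVecLin_apply, sub_mulVec, sub_eq_zero, ← mulVec_mulVec, ← mulVec_mulVec] at hc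
  have hTx : T *ᵥ (T⁻¹ *ᵥ (B *ᵥ c)) = B *ᵥ c := by
    rw [mulVec_mulVec, mul_nonsing_inv _ ((isUnit_iff_isUnit_det _).1 hT), one_mulVec]
  generalize T⁻¹ *ᵥ (B *ᵥ c) = x at hc hTx
  have hx : x = 0 := by
    apply key
    have h1 := aux_im hS c
    rw [← hc, dotProduct_mulVec, ← star_mulVec, ← hTx] at h1
    have h2 : star x ⬝ᵥ T *ᵥ x = star (star (T *ᵥ x) ⬝ᵥ x) := by
      rw [star_dotProduct]
    rw [h2]
    simpa using h1
  apply hB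
  rw [← hTx, hx, mulVec_zero]
end

section
/- Let k, m ∈ ℕ and index d₀×d₀ matrices by Fin k ⊕ Fin m. Let Q be a Hermitian k×k complex matrix, let Ψ be a unitary d₀×d₀ complex matrix, and let Π, Θ be diagonal d₀×d₀ matrices with real diagonal entries, with Π invertible. Let E := fromBlocks 1 0 0 0 (identity in the upper-left k×k block, zeros elsewhere), A₀ := (fromBlocks Q 0 0 1) * Ψᴴ + i·E * Ψᴴ * Θ, and B₀ := −E * Ψᴴ * Π. Then A₀ * Π⁻¹ * B₀ᴴ + i·B₀ * Π⁻¹ * Θ * Π⁻¹ * B₀ᴴ = −fromBlocks Q 0 0 0; in particular this matrix is Hermitian. -/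
open Matrix

theorem stmt17 (k m : ℕ) (Q : Matrix (Fin k) (Fin k) ℂ) (hQ : Q.IsHermitian)
    (Ψ : Matrix (Fin k ⊕ Fin m) (Fin k ⊕ Fin m) ℂ)
    (hΨ : Ψᴴ * Ψ = 1 ∧ Ψ * Ψᴴ = 1)
    (pv θv : Fin k ⊕ Fin m → ℝ)
    (Pm Tm E A₀ B₀ : Matrix (Fin k ⊕ Fin m) (Fin k ⊕ Fin m) ℂ)
    (hPm : Pm = Matrix.diagonal fun i => (pv i : ℂ))
    (hTm : Tm = Matrix.diagonal fun i => (θv i : ℂ))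
    (hPinv : IsUnit Pm)
    (hE : E = Matrix.fromBlocks (1 : Matrix (Fin k) (Fin k) ℂ) 0 0 0)
    (hA : A₀ = Matrix.fromBlocks Q 0 0 (1 : Matrix (Fin m) (Fin m) ℂ) * Ψᴴ +
      Complex.I • (E * Ψᴴ * Tm))
    (hB : B₀ = -(E * Ψᴴ * Pm)) :
    A₀ * Pm⁻¹ * B₀ᴴ + Complex.I • (B₀ * Pm⁻¹ * Tm * Pm⁻¹ * B₀ᴴ) =
      -(Matrix.fromBlocks Q 0 0 0) ∧
    (A₀ * Pm⁻¹ * B₀ᴴ + Complex.I • (B₀ * Pm⁻¹ * Tm * Pm⁻¹ * B₀ᴴ)).IsHermitian := by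
  have hdet : IsUnit Pm.det := (Matrix.isUnit_iff_isUnit_det Pm).1 hPinv
  have hPH : Pmᴴ = Pm := by
    rw [hPm, Matrix.diagonal_conjTranspose]
    congr 1
    funext i
    simp
  have hEH : Eᴴ = E := by
    rw [hE, Matrix.fromBlocks_conjTranspose]
    simp
  have hBH : Pm⁻¹ * B₀ᴴ = -(Ψ * E) := by
    rw [hB, Matrix.conjTranspose_neg, Matrix.conjTranspose_mul, Matrix.conjTranspose_mul,
      Matrix.conjTranspose_conjTranspose, hPH, hEH, Matrix.mul_neg,
      Matrix.nonsing_inv_mul_cancel_left _ _ hdet]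
  have hBP : B₀ * Pm⁻¹ = -(E * Ψᴴ) := by
    rw [hB, Matrix.neg_mul, Matrix.mul_nonsing_inv_cancel_right _ _ hdet]
  have hDE : Matrix.fromBlocks Q 0 0 (1 : Matrix (Fin m) (Fin m) ℂ) * E =
      Matrix.fromBlocks Q 0 0 0 := by
    rw [hE, Matrix.fromBlocks_multiply]
    simp
  have key : A₀ * Pm⁻¹ * B₀ᴴ + Complex.I • (B₀ * Pm⁻¹ * Tm * Pm⁻¹ * B₀ᴴ) =
      -(Matrix.fromBlocks Q 0 0 0) := by
    rw [Matrix.mul_assoc A₀, Matrix.mul_assoc _ Pm⁻¹ B₀ᴴ, hBH, hBP, hA, ← hDE]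
    have h1 : Ψᴴ * (Ψ * E) = E := by rw [← Matrix.mul_assoc, hΨ.1, Matrix.one_mul]
    simp only [Matrix.add_mul, Matrix.mul_neg, Matrix.neg_mul, Matrix.smul_mul,
      Matrix.mul_assoc, h1, neg_neg]
    abel
  refine ⟨key, ?_⟩
  rw [key, Matrix.IsHermitian, Matrix.conjTranspose_neg, Matrix.fromBlocks_conjTranspose, hQ.eq]
  simp
end
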